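/- For integers 0 ≤ k ≤ m, the Gaussian binomial coefficient [m choose k]_q is a polynomial in q of degree k(m−k) with coefficients c_0, …, c_{k(m−k)} that are palindromic and unimodal: c_{k(m−k)−i} = c_i for all i, c_0 = c_{k(m−k)} = 1, and c_0 ≤ c_1 ≤ … ≤ c_{⌊k(m−k)/2⌋}. -/

import Mathlib

/-!
The Gaussian binomial `[k + l choose k]_q` is the principal specialization `h_k(1, q, …, q ^ l)`
of the complete homogeneous symmetric polynomial: both satisfy the `q`-Pascal recursion. So its
coefficient of `q ^ w` counts the monomials of degree `k` in `X 0, …, X l` whose indices add up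
to `w`, which is the dimension of the weight space of `Sym^k (Sym^l K²)` of `sl₂`-weight
`2 * w - k * l`. A vector killed by the raising operator and by a power of the lowering operator
has its weight in `ℕ`, so raising is injective on negative weights and the coefficients increase
up to the middle. The degree and the palindromicity follow by reversing the product formula.
-/

open Finset

section SlTwo

theorem eq_zero_of_lie_e_eq_zero_of_forall_ne_natCast {R L M : Type*} [CommRing R] [IsDomain R]
    [CharZero R] [LieRing L] [LieAlgebra R L] [AddCommGroup M] [Module R M]
    [Module.IsTorsionFree R M] [LieRingModule L M] [LieModule R L M] {h e f : L}
    (t : IsSl2Triple h e f) {m : M} {μ : R} (hh : ⁅h, m⁆ = μ • m) (he : ⁅e, m⁆ = 0)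
    (hμ : ∀ n : ℕ, μ ≠ n) {n : ℕ} (hf : (LieModule.toEnd R L M f ^ n) m = 0) : m = 0 := by
  by_contra hm
  have primitive : t.HasPrimitiveVectorWith m μ := ⟨hm, hh, he⟩
  suffices ∀ n : ℕ, (LieModule.toEnd R L M f ^ n) m ≠ 0 from this n hf
  intro n
  induction n with
  | zero => simpa using hm
  | succ n ih =>
    intro hn
    have scalar_mul_eq_zero : ((n + 1 : R) * (μ - n)) • (LieModule.toEnd R L M f ^ n) m = 0 := by
      rw [← primitive.lie_e_pow_succ_toEnd_f, hn, lie_zero]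
    exact smul_ne_zero
      (mul_ne_zero n.cast_add_one_ne_zero (sub_ne_zero.2 (hμ n))) ih scalar_mul_eq_zero

end SlTwo

theorem weight_toFinsupp {σ M : Type*} [DecidableEq σ] [AddCommMonoid M] (w : σ → M)
    (s : Multiset σ) : Finsupp.weight w (Multiset.toFinsupp s) = (s.map w).sum := by
  induction s using Multiset.induction_on with
  | empty => simp
  | cons i s ih =>
    rw [← Multiset.singleton_add, map_add, map_add, ih]
    simp [Finsupp.weight_single]

section WeightedHomogeneous

open MvPolynomial

variable {σ R M : Type*} [CommSemiring R] [AddCommMonoid M] {w : σ → M}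

theorem isWeightedHomogeneous_derivation_apply
    (D : Derivation R (MvPolynomial σ R) (MvPolynomial σ R)) {δ : M}
    (hD : ∀ i, IsWeightedHomogeneous w (D (X i)) (w i + δ)) {p : MvPolynomial σ R} {n : M}
    (hp : IsWeightedHomogeneous w p n) : IsWeightedHomogeneous w (D p) (n + δ) := by
  induction hp using IsWeightedHomogeneous.induction_on with
  | zero => simpa using isWeightedHomogeneous_zero R w (n + δ)
  | add p q _ _ ihp ihq => simpa using ihp.add ihq
  | monomial d r hd =>
    have hD_eq : D = mkDerivation R fun i => D (X i) := derivation_ext fun i => by simp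
    rw [hD_eq, mkDerivation_monomial]
    refine (weightedHomogeneousSubmodule R w _).smul_mem r (IsWeightedHomogeneous.sum _ _ _ ?_)
    intro i hi
    rw [← hd, ← Finsupp.weight_sub_single_add (Finsupp.mem_support_iff.1 hi), add_assoc]
    exact (isWeightedHomogeneous_monomial w _ _ rfl).mul (hD i)

theorem isWeightedHomogeneous_comp_addMonoidHom {N : Type*} [AddCommMonoid N] (φ : M →+ N)
    {p : MvPolynomial σ R} {n : M} (hp : IsWeightedHomogeneous w p n) :
    IsWeightedHomogeneous (φ ∘ w) p (φ n) := by
  intro d hd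
  rw [← hp hd, Finsupp.weight_apply, Finsupp.weight_apply, map_finsuppSum]
  simp

theorem mkDerivation_smul_X_apply_of_isWeightedHomogeneous {w : σ → R} {p : MvPolynomial σ R}
    {μ : R} (hp : IsWeightedHomogeneous w p μ) :
    mkDerivation R (fun i => w i • (X i : MvPolynomial σ R)) p = μ • p := by
  induction hp using IsWeightedHomogeneous.induction_on with
  | zero => simp
  | add p q _ _ ihp ihq => rw [map_add, ihp, ihq, smul_add]
  | monomial d r hd =>
    have hterm : ∀ i ∈ d.support, monomial (d - Finsupp.single i 1) (d i : R) •
        w i • (X i : MvPolynomial σ R) = (d i • w i) • monomial d 1 := by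
      intro i hi
      rw [X, smul_monomial, smul_eq_mul, monomial_mul,
        Finsupp.sub_add_single_one_cancel (Finsupp.mem_support_iff.1 hi), smul_monomial]
      simp
    rw [mkDerivation_monomial, Finsupp.sum, Finset.sum_congr rfl hterm, ← Finset.sum_smul,
      ← hd, Finsupp.weight_apply, Finsupp.sum, smul_comm, smul_monomial, smul_eq_mul, mul_one]

theorem finrank_weightedHomogeneousSubmodule [StrongRankCondition R] (w : σ → M) (m : M) :
    Module.finrank R (weightedHomogeneousSubmodule R w m) =
      Nat.card {d : σ →₀ ℕ // Finsupp.weight w d = m} := by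
  rw [weightedHomogeneousSubmodule_eq_finsupp_supported]
  exact Module.finrank_eq_nat_card_basis (basisRestrictSupport R {d | Finsupp.weight w d = m})

end WeightedHomogeneous

section Bidegree

open MvPolynomial

variable {σ : Type*}

/-- The bidegree of the variable `X i` of weight `w i`: its degree and its weight. As a weight
function it grades `MvPolynomial σ R` by degree and total weight at once. The weight is recorded
in `ℤ` so that an operator lowering it is homogeneous of bidegree `(0, -1)`. -/
def bidegree (w : σ → ℕ) (i : σ) : ℕ × ℤ := (1, w i)

theorem weight_bidegree (w : σ → ℕ) (d : σ →₀ ℕ) :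
    Finsupp.weight (bidegree w) d = (d.degree, (Finsupp.weight w d : ℤ)) := by
  simp [Finsupp.weight_apply, Finsupp.sum, bidegree, Finsupp.degree_apply, Prod.ext_iff,
    Prod.fst_sum, Prod.snd_sum]

theorem finite_weightedHomogeneousSubmodule_bidegree (K : Type*) [CommRing K]
    [IsNoetherianRing K] [Finite σ] (w : σ → ℕ) (n : ℕ × ℤ) :
    Module.Finite K (weightedHomogeneousSubmodule K (bidegree w) n) := by
  have hle : weightedHomogeneousSubmodule K (bidegree w) n ≤
      weightedHomogeneousSubmodule K (fun _ => 1) n.1 :=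
    fun _ hp => isWeightedHomogeneous_comp_addMonoidHom (AddMonoidHom.fst ℕ ℤ) hp
  have hfin : Module.Finite K (weightedHomogeneousSubmodule K (fun _ : σ => 1) n.1) :=
    Module.Finite.iff_fg.2 (weightedHomogeneousSubmodule_fg K _ (by simp) _)
  exact Module.Finite.of_injective _ (Submodule.inclusion_injective hle)

theorem aeval_X_pow_prod_map_X {R : Type*} [CommSemiring R] (w : σ → ℕ) (s : Multiset σ) :
    aeval (fun i => (Polynomial.X : Polynomial R) ^ w i) (s.map (X : σ → MvPolynomial σ R)).prod =
      Polynomial.X ^ (s.map w).sum := by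
  induction s using Multiset.induction_on with
  | empty => simp
  | cons i s ih => simp [ih, pow_add]

theorem card_sym_sum_map_eq [Fintype σ] [DecidableEq σ] (w : σ → ℕ) (k n : ℕ) :
    #{s : Sym σ k | n = (s.1.map w).sum} =
      Nat.card {d : σ →₀ ℕ // Finsupp.weight (bidegree w) d = (k, (n : ℤ))} := by
  rw [← Fintype.card_subtype, ← Nat.card_eq_fintype_card]
  refine Nat.card_congr ((Equiv.subtypeSubtypeEquivSubtypeInter
    (fun s : Multiset σ => s.card = k) fun s => n = (s.map w).sum).trans
      (Multiset.toFinsupp.toEquiv.subtypeEquiv fun s => ?_))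
  have hdegree : (Multiset.toFinsupp s).degree = s.card := by
    rw [Finsupp.degree_eq_weight_one, weight_toFinsupp]
    simp
  rw [weight_bidegree, AddEquiv.toEquiv_eq_coe, AddEquiv.coe_toEquiv, hdegree, weight_toFinsupp,
    Prod.mk.injEq, Nat.cast_inj, eq_comm (a := n)]

theorem coeff_aeval_X_pow_hsymm {R : Type*} [CommSemiring R] [Fintype σ] [DecidableEq σ]
    (w : σ → ℕ) (k n : ℕ) :
    (aeval (fun i => (Polynomial.X : Polynomial R) ^ w i) (hsymm σ R k)).coeff n =
      Nat.card {d : σ →₀ ℕ // Finsupp.weight (bidegree w) d = (k, (n : ℤ))} := by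
  simp only [hsymm, map_sum, aeval_X_pow_prod_map_X, Polynomial.finsetSum_coeff,
    Polynomial.coeff_X_pow, Finset.sum_boole, ← card_sym_sum_map_eq]

end Bidegree

section SlTwoAction

open MvPolynomial

variable (K : Type*) [CommRing K] (l : ℕ)

/-- The raising operator of `sl₂` on the symmetric algebra of the `l`-th symmetric power of its
standard representation, with basis `X 0, …, X l`. The index `i + 1` wraps around only at `i = l`,
where the coefficient vanishes. -/
noncomputable def sl2Raising :
    Derivation K (MvPolynomial (Fin (l + 1)) K) (MvPolynomial (Fin (l + 1)) K) :=
  mkDerivation K fun i => ((l : K) - (i : ℕ)) • X (i + 1)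

/-- The lowering operator of `sl₂` companion to `sl2Raising`. The index `i - 1` wraps around only at
`i = 0`, where the coefficient vanishes. -/
noncomputable def sl2Lowering :
    Derivation K (MvPolynomial (Fin (l + 1)) K) (MvPolynomial (Fin (l + 1)) K) :=
  mkDerivation K fun i => ((i : ℕ) : K) • X (i - 1)

/-- The semisimple element of `sl₂` companion to `sl2Raising`: a monomial of degree `k` and weight
`w` is an eigenvector with eigenvalue `2 * w - l * k`. -/
noncomputable def sl2Cartan :
    Derivation K (MvPolynomial (Fin (l + 1)) K) (MvPolynomial (Fin (l + 1)) K) :=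
  mkDerivation K fun i => (2 * ((i : ℕ) : K) - l) • X i

variable {l}

theorem sub_val_mul_val_add_one (i : Fin (l + 1)) :
    ((l : K) - (i : ℕ)) * ((i + 1 : Fin (l + 1)) : ℕ) = (l - (i : ℕ)) * ((i : ℕ) + 1) := by
  rcases eq_or_ne i (Fin.last l) with rfl | hi
  · simp
  · rw [Fin.val_add_one_of_lt (Fin.lt_last_iff_ne_last.2 hi), Nat.cast_succ]

theorem val_mul_val_sub_one (i : Fin (l + 1)) :
    ((i : ℕ) : K) * ((i - 1 : Fin (l + 1)) : ℕ) = (i : ℕ) * ((i : ℕ) - 1) := by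
  rcases eq_or_ne i 0 with rfl | hi
  · simp
  · rw [Fin.val_sub_one_of_ne_zero hi, Nat.cast_pred (Fin.pos_iff_ne_zero.2 hi)]

variable (l)

theorem isSl2Triple_sl2Cartan_sl2Raising_sl2Lowering [NeZero (l : K)] :
    IsSl2Triple (sl2Cartan K l) (sl2Raising K l) (sl2Lowering K l) where
  h_ne_zero h0 := by
    have hX : (l : K) • (X 0 : MvPolynomial (Fin (l + 1)) K) = 0 := by
      simpa [sl2Cartan] using congr($h0 (X 0))
    have hcoeff := congr(coeff (Finsupp.single 0 1) $hX)
    simp [NeZero.ne (l : K)] at hcoeff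
  lie_e_f := derivation_ext fun i => by
    simp only [Derivation.commutator_apply, sl2Raising, sl2Lowering, sl2Cartan, mkDerivation_X,
      Derivation.map_smul, smul_smul, sub_add_cancel, add_sub_cancel_right, ← sub_smul]
    congr 1
    linear_combination -val_mul_val_sub_one K i - sub_val_mul_val_add_one K i
  lie_h_e_nsmul := derivation_ext fun i => by
    simp only [Derivation.commutator_apply, sl2Raising, sl2Cartan, mkDerivation_X,
      Derivation.map_smul, smul_smul, ← sub_smul, Derivation.smul_apply, ← Nat.cast_smul_eq_nsmul K]
    congr 1
    push_cast
    linear_combination 2 * sub_val_mul_val_add_one K i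
  lie_h_f_nsmul := derivation_ext fun i => by
    simp only [Derivation.commutator_apply, sl2Lowering, sl2Cartan, mkDerivation_X,
      Derivation.map_smul, smul_smul, ← sub_smul, Derivation.smul_apply,
      ← Nat.cast_smul_eq_nsmul K, ← neg_smul]
    congr 1
    push_cast
    linear_combination 2 * val_mul_val_sub_one K i

variable {K l} {p : MvPolynomial (Fin (l + 1)) K} {k : ℕ} {w : ℤ}

theorem isWeightedHomogeneous_sl2Raising
    (hp : IsWeightedHomogeneous (bidegree Fin.val) p (k, w)) :
    IsWeightedHomogeneous (bidegree Fin.val) (sl2Raising K l p) (k, w + 1) := by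
  refine isWeightedHomogeneous_derivation_apply (δ := (0, 1)) _ (fun i => ?_) hp
  rw [sl2Raising, mkDerivation_X]
  rcases eq_or_ne i (Fin.last l) with rfl | hi
  · simpa using isWeightedHomogeneous_zero K _ _
  · have hval : bidegree Fin.val i + (0, 1) = bidegree Fin.val (i + 1) := by
      simp [bidegree, Fin.val_add_one_of_lt (Fin.lt_last_iff_ne_last.2 hi)]
    rw [hval]
    exact (weightedHomogeneousSubmodule K _ _).smul_mem _ (isWeightedHomogeneous_X K _ _)

theorem isWeightedHomogeneous_sl2Lowering
    (hp : IsWeightedHomogeneous (bidegree Fin.val) p (k, w)) :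
    IsWeightedHomogeneous (bidegree Fin.val) (sl2Lowering K l p) (k, w - 1) := by
  refine isWeightedHomogeneous_derivation_apply (δ := (0, -1)) _ (fun i => ?_) hp
  rw [sl2Lowering, mkDerivation_X]
  rcases eq_or_ne i 0 with rfl | hi
  · simpa using isWeightedHomogeneous_zero K _ _
  · have hval : bidegree Fin.val i + (0, -1) = bidegree Fin.val (i - 1) := by
      rw [bidegree, bidegree, Fin.val_sub_one_of_ne_zero hi,
        Nat.cast_pred (Fin.pos_iff_ne_zero.2 hi), Prod.mk_add_mk, add_zero, sub_eq_add_neg]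
    rw [hval]
    exact (weightedHomogeneousSubmodule K _ _).smul_mem _ (isWeightedHomogeneous_X K _ _)

theorem sl2Cartan_apply_of_isWeightedHomogeneous
    (hp : IsWeightedHomogeneous (bidegree Fin.val) p (k, w)) :
    sl2Cartan K l p = (2 * w - l * k : K) • p := by
  let φ : ℕ × ℤ →+ K :=
    { toFun x := 2 * x.2 - l * x.1
      map_zero' := by simp
      map_add' x y := by push_cast [Prod.fst_add, Prod.snd_add]; ring }
  have hφ (i : Fin (l + 1)) : 2 * ((i : ℕ) : K) - l = (φ ∘ bidegree Fin.val) i := by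
    simp [φ, bidegree]
  simp only [sl2Cartan, hφ]
  exact mkDerivation_smul_X_apply_of_isWeightedHomogeneous
    (isWeightedHomogeneous_comp_addMonoidHom φ hp)

theorem sl2Lowering_pow_apply_eq_zero {w : ℕ}
    (hp : IsWeightedHomogeneous (bidegree Fin.val) p (k, (w : ℤ))) :
    (LieModule.toEnd K _ (MvPolynomial (Fin (l + 1)) K) (sl2Lowering K l) ^ (w + 1)) p = 0 := by
  have hpow (n : ℕ) : IsWeightedHomogeneous (bidegree Fin.val)
      ((LieModule.toEnd K _ (MvPolynomial (Fin (l + 1)) K) (sl2Lowering K l) ^ n) p)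
      (k, (w : ℤ) - n) := by
    induction n with
    | zero => simpa using hp
    | succ n ih =>
      rw [pow_succ', Nat.cast_succ, ← sub_sub]
      exact isWeightedHomogeneous_sl2Lowering ih
  refine (hpow (w + 1)).eq_zero_of_no_monomials fun d hd => ?_
  rw [weight_bidegree, Prod.mk.injEq] at hd
  omega

theorem eq_zero_of_sl2Raising_eq_zero [IsDomain K] [CharZero K] {w : ℕ} (hw : 2 * w < k * l)
    (hp : IsWeightedHomogeneous (bidegree Fin.val) p (k, (w : ℤ))) (he : sl2Raising K l p = 0) :
    p = 0 := by
  have : NeZero l := ⟨by rintro rfl; omega⟩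
  refine eq_zero_of_lie_e_eq_zero_of_forall_ne_natCast
    (isSl2Triple_sl2Cartan_sl2Raising_sl2Lowering K l)
    (sl2Cartan_apply_of_isWeightedHomogeneous hp) he (fun n hn => ?_)
    (sl2Lowering_pow_apply_eq_zero hp)
  have : 2 * w = n + l * k := by
    rw [sub_eq_iff_eq_add] at hn
    exact_mod_cast hn
  lia

theorem card_weight_bidegree_le_succ {k l w : ℕ} (hw : 2 * w < k * l) :
    Nat.card {d : Fin (l + 1) →₀ ℕ // Finsupp.weight (bidegree Fin.val) d = (k, (w : ℤ))} ≤
      Nat.card {d : Fin (l + 1) →₀ ℕ //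
        Finsupp.weight (bidegree Fin.val) d = (k, ((w + 1 : ℕ) : ℤ))} := by
  have := finite_weightedHomogeneousSubmodule_bidegree ℚ (Fin.val : Fin (l + 1) → ℕ)
    (k, ((w + 1 : ℕ) : ℤ))
  simp only [← finrank_weightedHomogeneousSubmodule (R := ℚ)]
  refine LinearMap.finrank_le_finrank_of_injective
    (f := (sl2Raising ℚ l : Module.End ℚ (MvPolynomial (Fin (l + 1)) ℚ)).restrict
      fun p hp => isWeightedHomogeneous_sl2Raising hp) ?_
  rw [injective_iff_map_eq_zero]
  exact fun p hp => Subtype.ext (eq_zero_of_sl2Raising_eq_zero hw p.2 (congrArg Subtype.val hp))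

end SlTwoAction

section HSymm

open MvPolynomial

theorem aeval_hsymm_option {σ R A : Type*} [CommSemiring R] [CommSemiring A] [Algebra R A]
    [Fintype σ] [DecidableEq σ] (f : Option σ → A) (k : ℕ) :
    aeval f (hsymm (Option σ) R (k + 1)) =
      f none * aeval f (hsymm (Option σ) R k) + aeval (f ∘ some) (hsymm σ R (k + 1)) := by
  simp only [hsymm, map_sum, ← Equiv.sum_comp symOptionSuccEquiv.symm, Fintype.sum_sum_type]
  simp [symOptionSuccEquiv, mul_sum, map_multiset_prod, Sym.coe_cons]

theorem aeval_hsymm_fin_succ {R A : Type*} [CommSemiring R] [CommSemiring A] [Algebra R A]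
    {n : ℕ} (f : Fin (n + 1) → A) (k : ℕ) :
    aeval f (hsymm (Fin (n + 1)) R (k + 1)) = f (Fin.last n) * aeval f (hsymm (Fin (n + 1)) R k) +
      aeval (fun i => f (Fin.castSucc i)) (hsymm (Fin n) R (k + 1)) := by
  simp only [← rename_hsymm (Option (Fin n)) R _ finSuccEquivLast.symm, aeval_rename,
    aeval_hsymm_option]
  simp [Function.comp_def]

theorem aeval_pow_hsymm_mul_prod {R A : Type*} [CommSemiring R] [CommRing A] [Algebra R A] (q : A)
    (n k : ℕ) :
    aeval (fun i : Fin n => q ^ (i : ℕ)) (hsymm (Fin n) R k) * ∏ i ∈ range k, (1 - q ^ (i + 1)) =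
      ∏ i ∈ range k, (1 - q ^ (n + i)) := by
  induction n generalizing k with
  | zero =>
    cases k with
    | zero => simp
    | succ k => simp [hsymm, prod_range_succ']
  | succ n ihn =>
    induction k with
    | zero => simp
    | succ k ihk =>
      have hpascal := aeval_hsymm_fin_succ (R := R) (fun i : Fin (n + 1) => q ^ (i : ℕ)) k
      simp only [Fin.val_last, Fin.val_castSucc] at hpascal
      have hshift : ∏ i ∈ range (k + 1), (1 - q ^ (n + i)) =
          (1 - q ^ n) * ∏ i ∈ range k, (1 - q ^ (n + 1 + i)) := by
        rw [prod_range_succ', mul_comm]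
        simp only [add_zero, add_assoc, add_comm 1]
      rw [hpascal, add_mul, ihn, hshift, prod_range_succ, prod_range_succ, ← ihk]
      ring

end HSymm

section ProdOneSubXPow

open Polynomial

variable {ι R : Type*} [CommRing R]

theorem natDegree_one_sub_X_pow [Nontrivial R] (n : ℕ) : (1 - X ^ n : R[X]).natDegree = n := by
  rw [← neg_sub, natDegree_neg, ← C_1, natDegree_X_pow_sub_C]

theorem reverse_one_sub_X_pow [Nontrivial R] (n : ℕ) :
    (1 - X ^ n : R[X]).reverse = -(1 - X ^ n) := by
  rw [reverse, natDegree_one_sub_X_pow, ← C_1, reflect_sub, reflect_C, reflect_monomial,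
    revAt_le le_rfl]
  simp

variable (s : Finset ι) (a : ι → ℕ)

theorem coeff_zero_prod_one_sub_X_pow (ha : ∀ i ∈ s, a i ≠ 0) :
    (∏ i ∈ s, (1 - X ^ a i : R[X])).coeff 0 = 1 := by
  rw [coeff_zero_eq_eval_zero, eval_prod]
  exact prod_eq_one fun i hi => by simp [ha i hi]

theorem prod_one_sub_X_pow_ne_zero [Nontrivial R] (ha : ∀ i ∈ s, a i ≠ 0) :
    ∏ i ∈ s, (1 - X ^ a i : R[X]) ≠ 0 := by
  intro h
  simpa [h] using coeff_zero_prod_one_sub_X_pow (R := R) s a ha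

variable [IsDomain R]

theorem natDegree_prod_one_sub_X_pow (ha : ∀ i ∈ s, a i ≠ 0) :
    (∏ i ∈ s, (1 - X ^ a i : R[X])).natDegree = ∑ i ∈ s, a i := by
  rw [natDegree_prod _ _ fun i hi => ne_zero_of_natDegree_gt (n := 0) ?_]
  · simp only [natDegree_one_sub_X_pow]
  · rw [natDegree_one_sub_X_pow]
    exact Nat.pos_of_ne_zero (ha i hi)

theorem reverse_prod_one_sub_X_pow :
    (∏ i ∈ s, (1 - X ^ a i : R[X])).reverse = (-1) ^ #s * ∏ i ∈ s, (1 - X ^ a i) := by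
  classical
  induction s using Finset.induction_on with
  | empty => simpa using reverse_C (1 : R)
  | insert i s hi ih =>
    rw [prod_insert hi, reverse_mul_of_domain, ih, reverse_one_sub_X_pow, card_insert_of_notMem hi]
    ring

theorem reverse_eq_self_of_mul_eq {f p q u : R[X]} (hp : p ≠ 0) (hu : u ≠ 0)
    (hrp : p.reverse = u * p) (hrq : q.reverse = u * q) (h : f * p = q) : f.reverse = f := by
  apply mul_right_cancel₀ (mul_ne_zero hu hp)
  rw [← hrp, ← reverse_mul_of_domain, h, hrq, ← h, hrp]
  ring

end ProdOneSubXPow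

section GaussianBinomial

open Polynomial

/-- The Gaussian binomial coefficient `[k + l choose k]_q`, encoded as the principal specialization
`h_k(1, q, …, q ^ l)`, which makes it a polynomial over any base without division. -/
noncomputable def gaussianBinomial (R : Type*) [CommSemiring R] (k l : ℕ) : R[X] :=
  MvPolynomial.aeval (fun i : Fin (l + 1) => X ^ (i : ℕ)) (MvPolynomial.hsymm (Fin (l + 1)) R k)

theorem coeff_gaussianBinomial_mono (R : Type*) [CommSemiring R] [PartialOrder R]
    [IsOrderedRing R] {k l i j : ℕ} (hij : i ≤ j) (hj : j ≤ k * l / 2) :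
    (gaussianBinomial R k l).coeff i ≤ (gaussianBinomial R k l).coeff j := by
  induction j, hij using Nat.le_induction with
  | base => rfl
  | succ j _ ih =>
    refine (ih (by lia)).trans ?_
    simp only [gaussianBinomial, coeff_aeval_X_pow_hsymm]
    exact Nat.mono_cast (card_weight_bidegree_le_succ (by lia))

theorem gaussianBinomial_mul_prod (R : Type*) [CommRing R] (k l : ℕ) :
    gaussianBinomial R k l * ∏ i ∈ range k, (1 - X ^ (i + 1)) =
      ∏ i ∈ range k, (1 - X ^ (l + i + 1)) := by
  simp only [gaussianBinomial, aeval_pow_hsymm_mul_prod, add_right_comm]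

theorem coeff_zero_gaussianBinomial (R : Type*) [CommRing R] (k l : ℕ) :
    (gaussianBinomial R k l).coeff 0 = 1 := by
  have hcoeff := congr(coeff $(gaussianBinomial_mul_prod R k l) 0)
  rwa [mul_coeff_zero, coeff_zero_prod_one_sub_X_pow _ _ (by simp), mul_one,
    coeff_zero_prod_one_sub_X_pow _ _ (by simp)] at hcoeff

section IsDomain

variable (R : Type*) [CommRing R] [IsDomain R] (k l : ℕ)

theorem natDegree_gaussianBinomial : (gaussianBinomial R k l).natDegree = k * l := by
  have hg : gaussianBinomial R k l ≠ 0 := by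
    intro h
    simpa [h] using coeff_zero_gaussianBinomial R k l
  have hdegree := congr(natDegree $(gaussianBinomial_mul_prod R k l))
  rw [natDegree_mul hg (prod_one_sub_X_pow_ne_zero _ _ (by simp)),
    natDegree_prod_one_sub_X_pow _ _ (by simp), natDegree_prod_one_sub_X_pow _ _ (by simp)]
    at hdegree
  simp only [add_assoc, sum_add_distrib (f := fun _ => l), sum_const, card_range,
    smul_eq_mul] at hdegree
  exact Nat.add_right_cancel hdegree

theorem reverse_gaussianBinomial : (gaussianBinomial R k l).reverse = gaussianBinomial R k l := by
  refine reverse_eq_self_of_mul_eq (prod_one_sub_X_pow_ne_zero _ _ (by simp)) (u := (-1) ^ k)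
    (by simp) ?_ ?_ (gaussianBinomial_mul_prod R k l) <;>
  rw [reverse_prod_one_sub_X_pow, card_range]

variable {k l}

theorem coeff_gaussianBinomial_sub {i : ℕ} (hi : i ≤ k * l) :
    (gaussianBinomial R k l).coeff (k * l - i) = (gaussianBinomial R k l).coeff i := by
  conv_rhs =>
    rw [← reverse_gaussianBinomial, coeff_reverse, natDegree_gaussianBinomial, revAt_le hi]

end IsDomain

theorem eq_gaussianBinomial_of_algebraMap_eq_prod {K : Type*} [Field K] {k l : ℕ} {g : K[X]}
    (hg : algebraMap K[X] (RatFunc K) g =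
      ∏ i ∈ range k, (1 - RatFunc.X ^ (l + i + 1)) / (1 - RatFunc.X ^ (i + 1))) :
    g = gaussianBinomial K k l := by
  have hprod : ∏ i ∈ range k, (1 - X ^ (i + 1) : K[X]) ≠ 0 :=
    prod_one_sub_X_pow_ne_zero _ _ (by simp)
  have hmap (a : ℕ → ℕ) : algebraMap K[X] (RatFunc K) (∏ i ∈ range k, (1 - X ^ a i)) =
      ∏ i ∈ range k, (1 - RatFunc.X ^ a i) := by simp
  apply mul_right_cancel₀ hprod
  apply RatFunc.algebraMap_injective K
  rw [gaussianBinomial_mul_prod, map_mul, hg, prod_div_distrib, ← hmap, ← hmap,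
    div_mul_cancel₀ _ (RatFunc.algebraMap_ne_zero hprod)]

theorem gaussian_binomial_palindromic_unimodal_general {K : Type*} [Field K] [LinearOrder K]
    [IsStrictOrderedRing K] (k l : ℕ) (g : K[X])
    (hg : algebraMap K[X] (RatFunc K) g =
      ∏ i ∈ range k, (1 - RatFunc.X ^ (l + i + 1)) / (1 - RatFunc.X ^ (i + 1))) :
    g.natDegree = k * l ∧
    (∀ i ≤ k * l, g.coeff (k * l - i) = g.coeff i) ∧
    g.coeff 0 = 1 ∧ g.coeff (k * l) = 1 ∧
    (∀ i j : ℕ, i ≤ j → j ≤ k * l / 2 → g.coeff i ≤ g.coeff j) := by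
  obtain rfl := eq_gaussianBinomial_of_algebraMap_eq_prod hg
  have palindromic (i : ℕ) (hi : i ≤ k * l) :
      (gaussianBinomial K k l).coeff (k * l - i) = (gaussianBinomial K k l).coeff i :=
    coeff_gaussianBinomial_sub K hi
  have constant_coeff : (gaussianBinomial K k l).coeff 0 = 1 := coeff_zero_gaussianBinomial K k l
  exact ⟨natDegree_gaussianBinomial K k l, palindromic, constant_coeff,
    (palindromic 0 (Nat.zero_le _)).trans constant_coeff,
    fun _ _ hij hj => coeff_gaussianBinomial_mono K hij hj⟩

end GaussianBinomial

/-- For integers `0 ≤ k ≤ m`, the Gaussian binomial coefficient `[m choose k]_q`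
(the polynomial `g` whose image in `ℚ(q)` is `∏_{i=1}^{k} (1−q^{m−k+i})/(1−q^i)`)
is a polynomial in `q` of degree `k(m−k)` whose coefficients `c_0, …, c_{k(m−k)}`
are palindromic and unimodal: `c_{k(m−k)−i} = c_i` for all `i`,
`c_0 = c_{k(m−k)} = 1`, and `c_0 ≤ c_1 ≤ … ≤ c_{⌊k(m−k)/2⌋}`. -/
theorem gaussian_binomial_palindromic_unimodal (m k : ℕ) (hk : k ≤ m)
    (g : Polynomial ℚ)
    (hg : algebraMap (Polynomial ℚ) (RatFunc ℚ) g =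
      ∏ i ∈ Finset.range k,
        (1 - RatFunc.X ^ (m - k + i + 1)) / (1 - RatFunc.X ^ (i + 1))) :
    g.natDegree = k * (m - k) ∧
    (∀ i ≤ k * (m - k), g.coeff (k * (m - k) - i) = g.coeff i) ∧
    g.coeff 0 = 1 ∧ g.coeff (k * (m - k)) = 1 ∧
    (∀ i j : ℕ, i ≤ j → j ≤ k * (m - k) / 2 → g.coeff i ≤ g.coeff j) :=
  gaussian_binomial_palindromic_unimodal_general k (m - k) g hg
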